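/- arXiv:math/0603129 — 2 statements merged into one kernel-verified Lean document; each statement's English description precedes it below -/
import Mathlib

section
/- If r ∈ Z[λ] is strongly G_5-elementary (i.e., every divisor of r is G_5-elementary), then r is a divisor of 4 in Z[λ]. -/
/-!
Every vector obtained from `(1, 0)` by the shears
`(x, y) ↦ (x, y + nλx)` and `(x, y) ↦ (x + nλy, y)`, `n ∈ ℤ`, is a column of a matrix representing
an element of `G₅`. Applying five of them alternately with integer
parameters `a, b, c, d, e` gives the first coordinate
`X = 1 + (ab + ad + cd)λ² + abcd λ⁴` and the second coordinate `λY` with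
`Y = a + c + abc λ² + eX`. Hence an elementary element dividing `Y` divides `X² - 1`
(`elementary_word`).

Over `ℚ` the parameters `(3, -2/3, 1, -3/2, 2)` give `Y = 0` and `X = λ - 1`, and then
`X² - 1 = 1 - λ` is a unit. If `s = m + nλ` is divisible by neither 2 nor 3, its norm
`m² + mn - n²`, which is a multiple of `s`, is prime to 6, so the fractions can be replaced by integers
modulo the norm. Therefore such an `s` is elementary only if it is a unit
(`isUnit_of_elementary`). Explicit words show that 3 and 8 are not elementary, so a strongly
elementary `r` has the form `2ᵏ s` with `k ≤ 2` and `s` elementary and prime to 6, hence a unit.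
-/

open Matrix

noncomputable section

/-- `λ = 2 cos(π/5) = (1+√5)/2`. -/
def lam : ℝ := 2 * Real.cos (Real.pi / 5)

/-- The ring `ℤ[λ]`, as a subring of `ℝ`. -/
def Zlam : Subring ℝ := Subring.closure {lam}

/-- `λ` as an element of `ℤ[λ]`. -/
def lamZ : Zlam := ⟨lam, Subring.subset_closure rfl⟩

/-- `SL(2,ℝ)`. -/
abbrev SL2R := Matrix.SpecialLinearGroup (Fin 2) ℝ

/-- `PSL(2,ℝ)`, realized as `SL(2,ℝ)` modulo its center `{±1}`. -/
abbrev PSL2R := SL2R ⧸ Subgroup.center SL2R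

/-- The canonical projection `SL(2,ℝ) → PSL(2,ℝ)`. -/
def toPSL : SL2R →* PSL2R := QuotientGroup.mk' (Subgroup.center SL2R)

/-- The generator `[[1, λ], [0, 1]]` of the Hecke group `G₅`. -/
def Tgen : SL2R := ⟨!![1, lam; 0, 1], by simp [Matrix.det_fin_two_of]⟩

/-- The generator `[[0, -1], [1, 0]]` of the Hecke group `G₅`. -/
def Sgen : SL2R := ⟨!![0, -1; 1, 0], by simp [Matrix.det_fin_two_of]⟩

/-- The Hecke group `G₅ ≤ PSL(2,ℝ)`, generated by the images of
`[[1, λ], [0, 1]]` and `[[0, -1], [1, 0]]`. -/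
def G5 : Subgroup PSL2R := Subgroup.closure {toPSL Tgen, toPSL Sgen}

/-- The subgroup of `SL(2,ℝ)` of matrices with entries in `ℤ[λ]` whose `(2,1)` entry is
divisible by `τ`. -/
def SL0 (τ : ℝ) : Subgroup SL2R where
  carrier := { A | (∀ i j, A.1 i j ∈ Zlam) ∧ ∃ k ∈ Zlam, A.1 1 0 = τ * k }
  one_mem' := by
    refine ⟨fun i j => ?_, 0, Zlam.zero_mem, by simp⟩
    rcases Decidable.eq_or_ne i j with h | h <;>
      simp [Matrix.one_apply, h, Zlam.one_mem, Zlam.zero_mem]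
  mul_mem' := by
    rintro A B ⟨hA, kA, hkA, hA10⟩ ⟨hB, kB, hkB, hB10⟩
    constructor
    · intro i j
      have : (A * B).1 i j = A.1 i 0 * B.1 0 j + A.1 i 1 * B.1 1 j := by
        simp [Matrix.mul_apply, Fin.sum_univ_two]
      rw [this]
      exact Zlam.add_mem (Zlam.mul_mem (hA i 0) (hB 0 j)) (Zlam.mul_mem (hA i 1) (hB 1 j))
    · refine ⟨kA * B.1 0 0 + A.1 1 1 * kB,
        Zlam.add_mem (Zlam.mul_mem hkA (hB 0 0)) (Zlam.mul_mem (hA 1 1) hkB), ?_⟩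
      have : (A * B).1 1 0 = A.1 1 0 * B.1 0 0 + A.1 1 1 * B.1 1 0 := by
        simp [Matrix.mul_apply, Fin.sum_univ_two]
      rw [this, hA10, hB10]; ring
  inv_mem' := by
    rintro A ⟨hA, kA, hkA, hA10⟩
    rw [Matrix.SpecialLinearGroup.SL2_inv_expl A]
    constructor
    · intro i j
      fin_cases i <;> fin_cases j <;>
        simp [Zlam.neg_mem, hA 0 0, hA 0 1, hA 1 0, hA 1 1]
    · exact ⟨-kA, Zlam.neg_mem hkA, by simp [hA10]⟩

/-- The congruence subgroup `G₀(τ) ≤ G₅`: elements of `G₅` represented by a matrix with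
entries in `ℤ[λ]` whose `(2,1)` entry is divisible by `τ`. -/
def G0 (τ : ℝ) : Subgroup PSL2R := G5 ⊓ (SL0 τ).map toPSL

/-- The principal congruence subgroup `G(ν)` of `G₅` (as a set): elements of `G₅`
represented by a matrix with entries in `ℤ[λ]` that is congruent to `±I` modulo `ν`. -/
def Gp (ν : ℝ) : Set PSL2R :=
  { g | g ∈ G5 ∧ ∃ A : SL2R, toPSL A = g ∧ (∀ i j, A.1 i j ∈ Zlam) ∧
      ((∀ i j, ∃ k ∈ Zlam, A.1 i j - (1 : Matrix (Fin 2) (Fin 2) ℝ) i j = ν * k) ∨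
       (∀ i j, ∃ k ∈ Zlam, A.1 i j + (1 : Matrix (Fin 2) (Fin 2) ℝ) i j = ν * k)) }

/-- `x/y` is in reduced form: `(x, y)ᵗ` is a column of a matrix representing an element
of `G₅`. -/
def IsReducedForm (x y : ℝ) : Prop :=
  ∃ A : SL2R, toPSL A ∈ G5 ∧
    ((A.1 0 0 = x ∧ A.1 1 0 = y) ∨ (A.1 0 1 = x ∧ A.1 1 1 = y))

/-- `g` is a gcd of `a` and `b` in `ℤ[λ]` (well defined up to units). -/
def IsGCDOf (g a b : Zlam) : Prop := g ∣ a ∧ g ∣ b ∧ ∀ d : Zlam, d ∣ a → d ∣ b → d ∣ g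

/-- `gcd(a, b)` is a unit in `ℤ[λ]`. -/
def CoprimeZ (a b : Zlam) : Prop := ∀ d : Zlam, d ∣ a → d ∣ b → IsUnit d

/-- `b = [τ]`: `(b)` is the largest ideal of `ℤ[λ]` with `(b²) ⊆ (τ)`. -/
def IsRadOf (τ b : Zlam) : Prop := τ ∣ b ^ 2 ∧ ∀ s : Zlam, τ ∣ s ^ 2 → b ∣ s

/-- `r ∈ ℤ[λ]` is `G₅`-elementary: whenever `x/(r·y)` is in reduced form,
`x² ≡ 1 (mod r)`. -/
def G5Elementary (r : Zlam) : Prop :=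
  ∀ x y : Zlam, IsReducedForm (x : ℝ) ((r : ℝ) * (y : ℝ)) → r ∣ (x ^ 2 - 1)

end

/-! ### The ring `ℤ[λ]` -/

theorem lam_eq_goldenRatio : lam = Real.goldenRatio := by
  rw [lam, Real.cos_pi_div_five, Real.goldenRatio]
  ring

theorem lamZ_sq : lamZ ^ 2 = lamZ + 1 := by
  apply Subtype.ext
  change lam ^ 2 = lam + 1
  rw [lam_eq_goldenRatio]
  exact Real.goldenRatio_sq

theorem lamZ_pow_four : lamZ ^ 4 = 3 * lamZ + 2 := by
  linear_combination (lamZ ^ 2 + lamZ + 2) * lamZ_sq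

theorem exists_eq_add_mul_lamZ (s : Zlam) : ∃ m n : ℤ, s = m + n * lamZ := by
  obtain ⟨s, hs⟩ := s
  have key : ∃ m n : ℤ, s = m + n * lam := by
    have hsq : lam ^ 2 = lam + 1 := congrArg Subtype.val lamZ_sq
    induction hs using Subring.closure_induction with
    | mem x hx => exact ⟨0, 1, by rw [Set.mem_singleton_iff.1 hx]; push_cast; ring⟩
    | zero => exact ⟨0, 0, by simp⟩
    | one => exact ⟨1, 0, by simp⟩
    | add x y _ _ hx hy =>
      obtain ⟨m, n, rfl⟩ := hx
      obtain ⟨k, l, rfl⟩ := hy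
      exact ⟨m + k, n + l, by push_cast; ring⟩
    | neg x _ hx =>
      obtain ⟨m, n, rfl⟩ := hx
      exact ⟨-m, -n, by push_cast; ring⟩
    | mul x y _ _ hx hy =>
      obtain ⟨m, n, rfl⟩ := hx
      obtain ⟨k, l, rfl⟩ := hy
      refine ⟨m * k + n * l, m * l + n * k + n * l, ?_⟩
      push_cast
      linear_combination (n * l : ℝ) * hsq
  obtain ⟨m, n, h⟩ := key
  refine ⟨m, n, Subtype.ext ?_⟩
  simpa [lamZ] using h

theorem not_intCast_mul_eq_one {p : ℤ} (hp : 1 < p) (w : Zlam) : (p : Zlam) * w ≠ 1 := by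
  intro h
  obtain ⟨m, n, rfl⟩ := exists_eq_add_mul_lamZ w
  have h' : (p : ℝ) * (m + n * lam) = 1 := by
    simpa [lamZ] using congrArg Subtype.val h
  by_cases hn : n = 0
  · subst hn
    have h1 : p * m = 1 := by
      have : (p : ℝ) * m = 1 := by simpa using h'
      exact_mod_cast this
    have := Int.eq_one_or_neg_one_of_mul_eq_one h1
    omega
  · have hirr : Irrational lam := lam_eq_goldenRatio ▸ Real.goldenRatio_irrational
    have hpn : p * n ≠ 0 := mul_ne_zero (by omega) hn
    refine (hirr.intCast_mul hpn).ne_int (1 - p * m) ?_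
    push_cast
    linear_combination h'

/-! ### Columns of matrices in `G₅` -/

theorem IsReducedForm.of_mul {g : SL2R} (hg : toPSL g ∈ G5) {x y : ℝ} (h : IsReducedForm x y) :
    IsReducedForm (g.1 0 0 * x + g.1 0 1 * y) (g.1 1 0 * x + g.1 1 1 * y) := by
  obtain ⟨A, hA, h⟩ := h
  refine ⟨g * A, by rw [map_mul]; exact mul_mem hg hA, ?_⟩
  rcases h with ⟨rfl, rfl⟩ | ⟨rfl, rfl⟩
  · left
    simp [Matrix.mul_apply, Fin.sum_univ_two]
  · right
    simp [Matrix.mul_apply, Fin.sum_univ_two]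

theorem isReducedForm_one_zero : IsReducedForm 1 0 :=
  ⟨1, by rw [map_one]; exact one_mem _, Or.inl (by simp)⟩

theorem IsReducedForm.rotate {x y : ℝ} (h : IsReducedForm x y) : IsReducedForm (-y) x := by
  have := h.of_mul (g := Sgen) (Subgroup.subset_closure (by simp))
  simpa [Sgen] using this

theorem Tgen_zpow (n : ℤ) : (Tgen ^ n).1 = !![1, n * lam; 0, 1] := by
  have hpos : ∀ k : ℕ, (Tgen ^ k).1 = !![1, k * lam; 0, 1] := by
    intro k
    induction k with
    | zero => simp [Matrix.one_fin_two]
    | succ k ih =>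
      rw [pow_succ, Matrix.SpecialLinearGroup.coe_mul, ih]
      simp [Tgen]
      ring
  obtain ⟨k, rfl | rfl⟩ := n.eq_nat_or_neg
  · simpa using hpos k
  · rw [_root_.zpow_neg, zpow_natCast, Matrix.SpecialLinearGroup.coe_inv, hpos k]
    simp [Matrix.adjugate_fin_two]

theorem IsReducedForm.shear_upper {x y : ℝ} (h : IsReducedForm x y) (n : ℤ) :
    IsReducedForm (x + n * lam * y) y := by
  have := h.of_mul (g := Tgen ^ n)
    (by rw [map_zpow]; exact zpow_mem (Subgroup.subset_closure (by simp)) n)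
  simpa [Tgen_zpow] using this

theorem IsReducedForm.shear_lower {x y : ℝ} (h : IsReducedForm x y) (n : ℤ) :
    IsReducedForm x (y + n * lam * x) := by
  have := (h.rotate.shear_upper (-n)).rotate.rotate.rotate
  convert this using 1
  · ring
  · push_cast
    ring

/-! ### Elementary elements -/

/-- The column produced from `(1, 0)` by the five shears with parameters `a, b, c, d, e` is
`(X, λY)`; an elementary `t` dividing `Y` divides `X² - 1`. -/
theorem elementary_word {t : Zlam} (ht : G5Elementary t) (a b c d e : ℤ) {X : Zlam}
    (hX : X = 1 + (a * b + a * d + c * d) * lamZ ^ 2 + a * b * c * d * lamZ ^ 4)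
    (hY : t ∣ a + c + a * b * c * lamZ ^ 2 + e * X) : t ∣ X ^ 2 - 1 := by
  obtain ⟨w, hw⟩ := hY
  refine ht X (w * lamZ) ?_
  have hw' : (a + c + a * b * c * lam ^ 2 + e * X : ℝ) = t * w := by
    simpa [lamZ] using congrArg Subtype.val hw
  have hX' : (X : ℝ) = 1 + (a * b + a * d + c * d) * lam ^ 2 + a * b * c * d * lam ^ 4 := by
    simpa [lamZ] using congrArg Subtype.val hX
  have key := ((((isReducedForm_one_zero.shear_lower a).shear_upper b).shear_lower
    c).shear_upper d).shear_lower e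
  convert key using 1
  · rw [hX']
    ring
  · have hl : ((w * lamZ : Zlam) : ℝ) = w * lam := by simp [lamZ]
    rw [hl, ← mul_assoc, ← hw', hX']
    ring

theorem not_elementary_three : ¬ G5Elementary 3 := by
  intro h
  have h1 := elementary_word h (-1) (-1) 1 1 (-1) (X := 4 * lamZ + 4)
    (by push_cast; linear_combination -lamZ_sq - lamZ_pow_four)
    ⟨-lamZ - 1, by push_cast; linear_combination lamZ_sq⟩
  obtain ⟨w, hw⟩ := h1
  refine not_intCast_mul_eq_one (p := 3) (by norm_num) (w - 16 * lamZ - 10) ?_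
  push_cast
  linear_combination -hw + 16 * lamZ_sq

theorem not_elementary_eight : ¬ G5Elementary 8 := by
  intro h
  have h1 := elementary_word h (-3) (-4) (-3) (-3) (-2) (X := 354 * lamZ + 247)
    (by push_cast; linear_combination -30 * lamZ_sq - 108 * lamZ_pow_four)
    ⟨-93 * lamZ - 67, by push_cast; linear_combination -36 * lamZ_sq⟩
  obtain ⟨w, hw⟩ := h1
  have h8 : (8 : Zlam) * w = 300192 * lamZ + 186324 := by
    linear_combination -hw + 354 ^ 2 * lamZ_sq
  have h4 : (4 : Zlam) * (2 * (w - 37524 * lamZ - 23290)) = 4 * 1 := by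
    linear_combination h8
  refine not_intCast_mul_eq_one (p := 2) (by norm_num) (w - 37524 * lamZ - 23290) ?_
  push_cast
  exact mul_left_cancel₀ (by norm_num) h4

/-- Since 2 and 3 are inert in `ℤ[λ]`, the norm `m² + mn - n²` of `m + nλ` is prime to
6 unless `m + nλ` is divisible by 2 or 3. -/
theorem norm_coprime_six {m n : ℤ} (h2 : ¬ (2 ∣ m ∧ 2 ∣ n)) (h3 : ¬ (3 ∣ m ∧ 3 ∣ n)) :
    IsCoprime (m ^ 2 + m * n - n ^ 2) 2 ∧ IsCoprime (m ^ 2 + m * n - n ^ 2) 3 := by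
  constructor
  · rw [isCoprime_comm, Int.prime_two.coprime_iff_not_dvd]
    intro h
    apply h2
    have hm : m % 2 = 0 ∨ m % 2 = 1 := by omega
    have hn : n % 2 = 0 ∨ n % 2 = 1 := by omega
    have h' := Int.emod_eq_zero_of_dvd h
    rcases hm with hm | hm <;> rcases hn with hn | hn <;>
      simp [Int.sub_emod, Int.add_emod, Int.mul_emod, pow_two, hm, hn] at h'
    omega
  · rw [isCoprime_comm, Int.prime_three.coprime_iff_not_dvd]
    intro h
    apply h3
    have hm : m % 3 = 0 ∨ m % 3 = 1 ∨ m % 3 = 2 := by omega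
    have hn : n % 3 = 0 ∨ n % 3 = 1 ∨ n % 3 = 2 := by omega
    have h' := Int.emod_eq_zero_of_dvd h
    rcases hm with hm | hm | hm <;> rcases hn with hn | hn | hn <;>
      simp [Int.sub_emod, Int.add_emod, Int.mul_emod, pow_two, hm, hn] at h'
    omega

theorem isUnit_of_elementary {s : Zlam} (hs : G5Elementary s) (h2 : ¬ 2 ∣ s) (h3 : ¬ 3 ∣ s) :
    IsUnit s := by
  obtain ⟨m, n, hmn⟩ := exists_eq_add_mul_lamZ s
  have hdvd : ∀ p : ℤ, p ∣ m ∧ p ∣ n → (p : Zlam) ∣ s := by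
    rintro p ⟨⟨k, rfl⟩, ⟨l, rfl⟩⟩
    exact ⟨k + l * lamZ, by rw [hmn]; push_cast; ring⟩
  obtain ⟨⟨u, v, huv⟩, ⟨u', v', huv'⟩⟩ := norm_coprime_six (m := m) (n := n)
    (fun h => h2 (by simpa using hdvd 2 h)) (fun h => h3 (by simpa using hdvd 3 h))
  -- `m + n - nλ` is the Galois conjugate of `s`.
  have hN : s * (m + n - n * lamZ) = ((m ^ 2 + m * n - n ^ 2 : ℤ) : Zlam) := by
    rw [hmn]
    push_cast
    linear_combination -(n : Zlam) ^ 2 * lamZ_sq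
  -- Modulo the norm, `b = -2v'` represents `-2/3` and `d = -3v` represents `-3/2`.
  obtain ⟨b, hb⟩ : ∃ b : ℤ, s ∣ 3 * (b : Zlam) + 2 := by
    refine ⟨-2 * v', (m + n - n * lamZ) * (2 * u'), ?_⟩
    have := congrArg (Int.cast : ℤ → Zlam) huv'
    rw [Int.cast_add, Int.cast_mul, ← hN] at this
    push_cast at this ⊢
    linear_combination -2 * this
  obtain ⟨d, hd⟩ : ∃ d : ℤ, s ∣ 2 * (d : Zlam) + 3 := by
    refine ⟨-3 * v, (m + n - n * lamZ) * (3 * u), ?_⟩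
    have := congrArg (Int.cast : ℤ → Zlam) huv
    rw [Int.cast_add, Int.cast_mul, ← hN] at this
    push_cast at this ⊢
    linear_combination -3 * this
  obtain ⟨k, hk⟩ := hb
  obtain ⟨l, hl⟩ := hd
  have hbd : 3 * (b : Zlam) * d = 3 + s * (k * d - l) := by
    linear_combination d * hk - hl
  obtain ⟨X, hX⟩ : ∃ X : Zlam, X = 1 + (((3 : ℤ) : Zlam) * b + ((3 : ℤ) : Zlam) * d +
    ((1 : ℤ) : Zlam) * d) * lamZ ^ 2 + ((3 : ℤ) : Zlam) * b * ((1 : ℤ) : Zlam) * d * lamZ ^ 4 :=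
    ⟨_, rfl⟩
  have hX' : X = lamZ - 1 + s * ((k + 2 * l) * lamZ ^ 2 + (k * d - l) * lamZ ^ 4) := by
    rw [hX]
    push_cast
    linear_combination lamZ ^ 2 * hk + 2 * lamZ ^ 2 * hl + lamZ ^ 4 * hbd
      - 8 * lamZ_sq + 3 * lamZ_pow_four
  have h1 := elementary_word hs 3 b 1 d 2 hX ⟨k * lamZ ^ 2 +
    2 * ((k + 2 * l) * lamZ ^ 2 + (k * d - l) * lamZ ^ 4), by
      rw [hX']
      push_cast
      linear_combination lamZ ^ 2 * hk - 2 * lamZ_sq⟩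
  have h4 : s ∣ 1 - lamZ := by
    obtain ⟨w, hw⟩ := h1
    set q := (k + 2 * l) * lamZ ^ 2 + (k * d - l) * lamZ ^ 4
    refine ⟨w - q * (X + lamZ - 1), ?_⟩
    linear_combination hw - (X + lamZ - 1) * hX' - lamZ_sq
  refine isUnit_of_dvd_one (h4.trans ⟨-lamZ, ?_⟩)
  linear_combination -lamZ_sq

/-- If `r ∈ ℤ[λ]` is strongly `G₅`-elementary (every divisor of `r` is `G₅`-elementary),
then `r` divides `4`. -/
theorem dvd_four_of_strongly_elementary (r : Zlam)
    (h : ∀ d : Zlam, d ∣ r → G5Elementary d) : r ∣ 4 := by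
  have h3 : ¬ 3 ∣ r := fun h' => not_elementary_three (h 3 h')
  have h8 : ¬ 8 ∣ r := fun h' => not_elementary_eight (h 8 h')
  have key : ∀ s : Zlam, s ∣ r → ¬ 2 ∣ s → IsUnit s := fun s hs h2 =>
    isUnit_of_elementary (h s hs) h2 (fun h' => h3 (h'.trans hs))
  by_cases h2 : 2 ∣ r
  · obtain ⟨s, rfl⟩ := h2
    by_cases h2 : 2 ∣ s
    · obtain ⟨t, rfl⟩ := h2
      have ht : IsUnit t := by
        refine key t ⟨4, by ring⟩ ?_
        rintro ⟨u, rfl⟩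
        exact h8 ⟨u, by ring⟩
      obtain ⟨w, hw⟩ := ht.dvd (a := 1)
      exact ⟨w, by linear_combination 4 * hw⟩
    · obtain ⟨w, hw⟩ := (key s ⟨2, by ring⟩ h2).dvd (a := 1)
      exact ⟨2 * w, by linear_combination 4 * hw⟩
  · exact (key r dvd_rfl h2).dvd
end

section
/- For every nonzero rational integer n ∈ ℤ with gcd(n, 2) = 1, the fractions (2λ²)/(nλ³) and (4λ²)/(nλ³) are in reduced form; that is, the reduced factors of 2/(nλ) and 4/(nλ) both equal 2. -/
/-!
The reduced forms are the pairs in the `G₅`-orbits of the coordinate vectors, so they are stable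
under `(x, y) ↦ (-x, -y)` and under the shears `(x, y) ↦ (x + kλy, y)` and
`(x, y) ↦ (x, y + kλx)` for every `k ∈ ℤ`
(`IsReducedForm.shift_fst`, `IsReducedForm.shift_snd`).

The second shear applied to `(2λ², nλ³)` changes `n` by multiples of `2`, and applied to
`(4λ², nλ³)` changes `n` by multiples of `4`. As `n` is odd, this leaves only the pairs
`(2λ², λ³)` and `(4λ², ±λ³)`, which three further shears join to `(0, ±1)` by means of
`λ² = λ + 1`.
-/

open Matrix

theorem lam_sq : lam ^ 2 = lam + 1 := by
  have h5 : (Real.sqrt 5) ^ 2 = 5 := Real.sq_sqrt (by norm_num)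
  unfold lam
  rw [Real.cos_pi_div_five]
  linear_combination h5 / 4

/-- The set of reduced forms is stable under the linear action of matrices representing
elements of `G₅`. -/
theorem IsReducedForm.act {x y : ℝ} (h : IsReducedForm x y) (M : SL2R) (hM : toPSL M ∈ G5) :
    IsReducedForm (M.1 0 0 * x + M.1 0 1 * y) (M.1 1 0 * x + M.1 1 1 * y) := by
  obtain ⟨A, hA, hxy⟩ := h
  refine ⟨M * A, by rw [map_mul]; exact G5.mul_mem hM hA, ?_⟩
  rcases hxy with ⟨rfl, rfl⟩ | ⟨rfl, rfl⟩
  · left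
    simp [Matrix.mul_apply, Fin.sum_univ_two]
  · right
    simp [Matrix.mul_apply, Fin.sum_univ_two]

theorem Tgen_mem : toPSL Tgen ∈ G5 := Subgroup.subset_closure (by simp)

theorem Sgen_mem : toPSL Sgen ∈ G5 := Subgroup.subset_closure (by simp)

theorem IsReducedForm.neg {x y : ℝ} (h : IsReducedForm x y) : IsReducedForm (-x) (-y) :=
  h.rotate.rotate

theorem isReducedForm_zero_one : IsReducedForm 0 1 :=
  ⟨1, by rw [map_one]; exact G5.one_mem, Or.inr (by simp)⟩

/-- Translation by `Tᵏ`, for every integer `k`. -/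
theorem IsReducedForm.shift_fst {x y : ℝ} (h : IsReducedForm x y) (k : ℤ) :
    IsReducedForm (x + k * lam * y) y := by
  induction k with
  | zero => simpa using h
  | succ k ih =>
    have := ih.act Tgen Tgen_mem
    simp only [Tgen, Matrix.of_apply, Matrix.cons_val', Matrix.cons_val_zero,
      Matrix.cons_val_one, Matrix.cons_val_fin_one] at this
    convert this using 1
    · push_cast; ring
    · ring
  | pred k ih =>
    have := ih.act Tgen⁻¹ (by rw [map_inv]; exact G5.inv_mem Tgen_mem)
    rw [Matrix.SpecialLinearGroup.SL2_inv_expl] at this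
    simp only [Tgen, Matrix.of_apply, Matrix.cons_val', Matrix.cons_val_zero,
      Matrix.cons_val_one, Matrix.cons_val_fin_one] at this
    convert this using 1
    · push_cast; ring
    · ring

/-- The transposed shear, which is the conjugate of a translation by `S`. -/
theorem IsReducedForm.shift_snd {x y : ℝ} (h : IsReducedForm x y) (k : ℤ) :
    IsReducedForm x (y + k * lam * x) := by
  convert (h.rotate.shift_fst (-k)).rotate.neg using 1
  · ring
  · push_cast; ring

/-- For `n ∈ ℤ` nonzero with `gcd(n, 2) = 1`, both `(2λ²)/(nλ³)` and `(4λ²)/(nλ³)` are in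
reduced form; i.e. the reduced factors of `2/(nλ)` and `4/(nλ)` equal `2`. -/
theorem reduced_form_two_four (n : ℤ) (hn : n ≠ 0) (hco : Int.gcd n 2 = 1) :
    IsReducedForm (2 * lam ^ 2) ((n : ℝ) * lam ^ 3) ∧
    IsReducedForm (4 * lam ^ 2) ((n : ℝ) * lam ^ 3) := by
  have hl := lam_sq
  have hodd : n % 2 = 1 := by
    rcases Int.emod_two_eq_zero_or_one n with h | h
    · have h2 : 2 ∣ Int.gcd n 2 :=
        Int.dvd_gcd (Int.dvd_of_emod_eq_zero h) (dvd_refl _)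
      omega
    · exact h
  constructor
  · obtain ⟨m, rfl⟩ : ∃ m, n = 2 * m + 1 := ⟨n / 2, by omega⟩
    -- (0, -1) ↦ (-λ, -1) ↦ (-λ, λ³) ↦ (2λ², λ³) ↦ (2λ², nλ³)
    convert (((isReducedForm_zero_one.neg.shift_fst 1).shift_snd (-2)).shift_fst 1).shift_snd m
      using 1
    · push_cast; grind
    · push_cast; grind
  · obtain ⟨m, rfl | rfl⟩ : ∃ m, n = 4 * m + 1 ∨ n = 4 * m - 1 := ⟨(n + 1) / 4, by omega⟩
    -- (0, -1) ↦ (-2λ, -1) ↦ (-2λ, λ³) ↦ (4λ², λ³) ↦ (4λ², nλ³)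
    · convert (((isReducedForm_zero_one.neg.shift_fst 2).shift_snd (-1)).shift_fst 2).shift_snd m
        using 1
      · push_cast; grind
      · push_cast; grind
    -- (0, 1) ↦ (-2λ, 1) ↦ (-2λ, -λ³) ↦ (4λ², -λ³) ↦ (4λ², nλ³)
    · convert (((isReducedForm_zero_one.shift_fst (-2)).shift_snd 1).shift_fst (-2)).shift_snd m
        using 1
      · push_cast; grind
      · push_cast; grind
end
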